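/- Let H be a real inner product space and let h : 𝕋 → H be a measurable function with ‖h(y)‖ = 1 for almost every y. Define G : 𝕋 → H by G(x) = ∫_𝕋 f(x,y) h(y) dy. Then ∫_𝕋 ‖G(x)‖ dx ≤ 2/π. -/

import Mathlib

open MeasureTheory Real

/-- The sign kernel on the circle: `1` at distance less than a quarter turn, `-1` otherwise. -/
noncomputable def quarterSign (x y : UnitAddCircle) : ℝ :=
  if dist x y < 1 / 4 then 1 else -1

lemma measurable_quarterSign : Measurable fun p : UnitAddCircle × UnitAddCircle =>
    quarterSign p.1 p.2 :=
  Measurable.ite (measurableSet_lt (by fun_prop) measurable_const) measurable_const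
    measurable_const

lemma norm_quarterSign (x y : UnitAddCircle) : ‖quarterSign x y‖ = 1 := by
  unfold quarterSign; split_ifs <;> simp

lemma quarterSign_add_right (x y : UnitAddCircle) : quarterSign (x + y) y = quarterSign x 0 := by
  simp [quarterSign, dist_eq_norm]

lemma quarterSign_coe_zero {t : ℝ} (ht : |t| ≤ 1 / 2) :
    quarterSign (t : UnitAddCircle) 0 = if |t| < 1 / 4 then 1 else -1 := by
  have : ‖(t : UnitAddCircle)‖ = |t| :=
    (AddCircle.norm_coe_eq_abs_iff (p := 1) (x := t) one_ne_zero).2 (by simpa using ht)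
  simp [quarterSign, this]

/-- Parseval's identity for square-integrable functions on the circle. -/
lemma hasSum_sq_fourierCoeff_of_memLp {T : ℝ} [Fact (0 < T)] {u : AddCircle T → ℂ}
    (hu : MemLp u 2 AddCircle.haarAddCircle) :
    HasSum (fun n => ‖fourierCoeff u n‖ ^ 2) (∫ x, ‖u x‖ ^ 2 ∂AddCircle.haarAddCircle) := by
  obtain ⟨F, hF⟩ : ∃ F : Lp ℂ 2 (AddCircle.haarAddCircle (T := T)),
      F =ᵐ[AddCircle.haarAddCircle] u :=
    ⟨hu.toLp, hu.coeFn_toLp⟩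
  have h := hasSum_sq_fourierCoeff F
  have e : ∫ x, ‖F x‖ ^ 2 ∂AddCircle.haarAddCircle =
      ∫ x, ‖u x‖ ^ 2 ∂AddCircle.haarAddCircle := by
    refine integral_congr_ae ?_
    filter_upwards [hF] with x hx
    rw [hx]
  rw [e, fourierCoeff_congr_ae hF] at h
  exact h

lemma hasSum_sq_fourierCoeff_unitAddCircle {u : UnitAddCircle → ℂ} (hu : MemLp u 2) :
    HasSum (fun n => ‖fourierCoeff u n‖ ^ 2) (∫ x, ‖u x‖ ^ 2) := by
  have h := hasSum_sq_fourierCoeff_of_memLp (memLp_haarAddCircle_iff.2 hu)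
  rwa [AddCircle.integral_haarAddCircle, inv_one, one_smul] at h

lemma integrable_fourier (n : ℤ) : Integrable (fun x : UnitAddCircle => fourier n x) :=
  (fourier n).continuous.integrable_of_hasCompactSupport (HasCompactSupport.of_compactSpace _)

lemma integral_fourier_eq_zero {n : ℤ} (hn : n ≠ 0) :
    ∫ x : UnitAddCircle, fourier n x = 0 := by
  have h := congrFun (fourierCoeff_fourier (T := 1) n) 0
  rw [Pi.single_eq_of_ne hn.symm] at h
  simpa [fourierCoeff, AddCircle.integral_haarAddCircle] using h

lemma norm_integral_fourier_quarter_le {n : ℤ} (hn : n ≠ 0) :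
    ‖∫ t in (-(1 / 4) : ℝ)..1 / 4, fourier n (t : UnitAddCircle)‖ ≤ 1 / π := by
  have hc : (2 * π * Complex.I * n : ℂ) ≠ 0 := by
    simp [hn, Real.pi_ne_zero]
  have e : ∀ t : ℝ, (fourier n (t : UnitAddCircle) : ℂ) =
      Complex.exp (2 * π * Complex.I * n * t) := by
    intro t; rw [fourier_coe_apply]; simp
  simp_rw [e]
  rw [integral_exp_mul_complex hc, norm_div]
  have h1 : ∀ t : ℝ, ‖Complex.exp (2 * π * Complex.I * n * t)‖ = 1 := by
    intro t
    rw [← e]; exact Circle.norm_coe _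
  have h2 : ‖(2 * π * Complex.I * n : ℂ)‖ = 2 * π * |(n : ℝ)| := by
    simp [abs_of_pos Real.pi_pos]
  have h3 : (1 : ℝ) ≤ |(n : ℝ)| := by exact_mod_cast Int.one_le_abs hn
  rw [h2, div_le_div_iff₀ (by positivity) Real.pi_pos]
  have := norm_sub_le (Complex.exp (2 * π * Complex.I * n * (1 / 4 : ℝ)))
    (Complex.exp (2 * π * Complex.I * n * (-(1 / 4) : ℝ)))
  rw [h1, h1] at this
  nlinarith [Real.pi_pos, mul_le_mul_of_nonneg_left h3 Real.pi_pos.le]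

lemma norm_integral_fourier_mul_quarterSign_le (n : ℤ) :
    ‖∫ x : UnitAddCircle, fourier n x * (quarterSign x 0 : ℂ)‖ ≤ 2 / π := by
  have e : ∫ x : UnitAddCircle, fourier n x * (quarterSign x 0 : ℂ) =
      2 * (∫ t in (-(1 / 4) : ℝ)..1 / 4, fourier n (t : UnitAddCircle)) -
        ∫ x : UnitAddCircle, fourier n x := by
    have hI : Integrable fun x : UnitAddCircle =>
        fourier n x * ((quarterSign x 0 + 1 : ℝ) : ℂ) := by
      refine (integrable_fourier n).mul_bdd (c := 2) ?_ ?_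
      · have := measurable_quarterSign.comp
          (measurable_id.prodMk (measurable_const (a := (0 : UnitAddCircle))))
        exact (Complex.measurable_ofReal.comp (this.add_const 1)).aestronglyMeasurable
      · refine .of_forall fun x => ?_
        rw [Complex.norm_real]
        refine (norm_add_le _ _).trans ?_
        rw [norm_quarterSign]; norm_num
    have h1 : ∫ x : UnitAddCircle, fourier n x * (quarterSign x 0 : ℂ) =
        (∫ x : UnitAddCircle, fourier n x * ((quarterSign x 0 + 1 : ℝ) : ℂ)) -
        ∫ x : UnitAddCircle, fourier n x := by
      rw [← integral_sub hI (integrable_fourier n)]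
      congr 1 with x
      push_cast; ring
    rw [h1, ← UnitAddCircle.integral_preimage (-(1 / 2))]
    congr 1
    rw [intervalIntegral.integral_of_le (by norm_num),
      integral_Ioc_eq_integral_Ioo (x := (-(1 / 4) : ℝ)),
      ← integral_const_mul]
    rw [← integral_indicator measurableSet_Ioc, ← integral_indicator measurableSet_Ioo]
    congr 1 with t
    by_cases ht : t ∈ Set.Ioc (-(1 / 2) : ℝ) (-(1 / 2) + 1)
    · rw [Set.indicator_of_mem ht, quarterSign_coe_zero (abs_le.2 ⟨ht.1.le, by linarith [ht.2]⟩)]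
      by_cases h4 : |t| < 1 / 4
      · rw [Set.indicator_of_mem (Set.mem_Ioo.2 (abs_lt.1 h4)), if_pos h4]
        push_cast; ring
      · rw [Set.indicator_of_notMem (fun h => h4 (abs_lt.2 (Set.mem_Ioo.1 h))), if_neg h4]
        simp
    · rw [Set.indicator_of_notMem ht, Set.indicator_of_notMem]
      rintro ⟨h1, h2⟩
      exact ht ⟨by linarith, by linarith⟩
  rw [e]
  rcases eq_or_ne n 0 with rfl | hn
  · simp only [fourier_zero]
    norm_num [Measure.real, UnitAddCircle.measure_univ]
    exact div_nonneg zero_le_two Real.pi_pos.le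
  · rw [integral_fourier_eq_zero hn, sub_zero, norm_mul]
    have := norm_integral_fourier_quarter_le hn
    simp only [Complex.norm_ofNat]
    calc _ ≤ 2 * (1 / π) := by gcongr
      _ = 2 / π := by ring

lemma integral_fourier_mul_quarterSign (n : ℤ) (y : UnitAddCircle) :
    ∫ x : UnitAddCircle, fourier n x * (quarterSign x y : ℂ) =
      fourier n y * ∫ x : UnitAddCircle, fourier n x * (quarterSign x 0 : ℂ) := by
  rw [← integral_add_right_eq_self _ y, ← integral_const_mul]
  congr 1 with x
  rw [quarterSign_add_right, fourier_apply, smul_add, AddCircle.toCircle_add]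
  simp only [fourier_apply, Circle.coe_mul]
  ring

lemma integrable_prod_quarterSign_smul {E : Type*} [NormedAddCommGroup E] [NormedSpace ℝ E]
    {u : UnitAddCircle → E} (hu : Integrable u) :
    Integrable (fun p : UnitAddCircle × UnitAddCircle => quarterSign p.1 p.2 • u p.2)
      (volume.prod volume) :=
  (hu.comp_snd volume).bdd_smul 1 measurable_quarterSign.aestronglyMeasurable
    (.of_forall fun _ => (norm_quarterSign _ _).le)

lemma integrable_quarterSign_smul {E : Type*} [NormedAddCommGroup E] [NormedSpace ℝ E]
    {u : UnitAddCircle → E} (hu : Integrable u) (x : UnitAddCircle) :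
    Integrable fun y => quarterSign x y • u y :=
  hu.bdd_smul 1 (measurable_quarterSign.comp measurable_prodMk_left).aestronglyMeasurable
    (.of_forall fun _ => (norm_quarterSign _ _).le)

lemma fourierCoeff_integral_quarterSign {u : UnitAddCircle → ℂ} (hu : Integrable u) (n : ℤ) :
    fourierCoeff (fun x => ∫ y, quarterSign x y • u y) n =
      (∫ x : UnitAddCircle, fourier (-n) x * (quarterSign x 0 : ℂ)) * fourierCoeff u n := by
  have hp := integrable_prod_quarterSign_smul hu
  have hp' : Integrable (fun p : UnitAddCircle × UnitAddCircle =>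
      fourier (-n) p.1 * (quarterSign p.1 p.2 • u p.2)) (volume.prod volume) := by
    refine hp.bdd_mul (c := 1) (by fun_prop) (.of_forall fun p => ?_)
    exact (Circle.norm_coe _).le
  simp only [fourierCoeff, AddCircle.integral_haarAddCircle, inv_one, one_smul]
  simp only [smul_eq_mul, ← integral_const_mul]
  rw [integral_integral_swap hp']
  congr 1 with y
  have := integral_fourier_mul_quarterSign (-n) y
  calc _ = (∫ x : UnitAddCircle, fourier (-n) x * (quarterSign x y : ℂ)) * u y := by
        rw [← integral_mul_const]
        congr 1 with x
        rw [Complex.real_smul]; ring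
    _ = _ := by rw [this]; ring

lemma norm_integral_quarterSign_smul_le {E : Type*} [NormedAddCommGroup E] [NormedSpace ℝ E]
    (u : UnitAddCircle → E) (x : UnitAddCircle) :
    ‖∫ y, quarterSign x y • u y‖ ≤ ∫ y, ‖u y‖ := by
  refine (norm_integral_le_integral_norm _).trans_eq ?_
  simp only [norm_smul, norm_quarterSign, one_mul]

lemma memLp_integral_quarterSign {E : Type*} [NormedAddCommGroup E] [NormedSpace ℝ E]
    {u : UnitAddCircle → E} (hu : Integrable u) (p : ENNReal) :
    MemLp (fun x => ∫ y, quarterSign x y • u y) p :=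
  .of_bound (integrable_prod_quarterSign_smul hu).aestronglyMeasurable.integral_prod_right' _
    (.of_forall (norm_integral_quarterSign_smul_le u))

lemma integral_sq_integral_quarterSign_le {u : UnitAddCircle → ℂ} (hu : MemLp u 2) :
    ∫ x, ‖∫ y, quarterSign x y • u y‖ ^ 2 ≤ (2 / π) ^ 2 * ∫ y, ‖u y‖ ^ 2 := by
  have hi : Integrable u := hu.integrable (by norm_num)
  refine hasSum_le (fun n => ?_)
    (hasSum_sq_fourierCoeff_unitAddCircle (memLp_integral_quarterSign hi 2))
    ((hasSum_sq_fourierCoeff_unitAddCircle hu).mul_left _)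
  rw [fourierCoeff_integral_quarterSign hi, norm_mul, mul_pow]
  gcongr
  exact norm_integral_fourier_mul_quarterSign_le _


lemma enorm_sq_eq_ofReal {E : Type*} [NormedAddCommGroup E] (v : E) :
    ‖v‖ₑ ^ 2 = ENNReal.ofReal (‖v‖ ^ 2) := by
  rw [ENNReal.ofReal_pow (norm_nonneg _), ofReal_norm]

lemma lintegral_enorm_sq_eq_ofReal {α E : Type*} [MeasurableSpace α] {μ : Measure α}
    [NormedAddCommGroup E] {u : α → E} (hu : MemLp u 2 μ) :
    ∫⁻ x, ‖u x‖ₑ ^ 2 ∂μ = ENNReal.ofReal (∫ x, ‖u x‖ ^ 2 ∂μ) := by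
  rw [ofReal_integral_eq_lintegral_ofReal ((memLp_two_iff_integrable_sq_norm hu.1).1 hu)
    (.of_forall fun x => by positivity)]
  simp only [enorm_sq_eq_ofReal]

lemma lintegral_sq_integral_quarterSign_le_of_real {u : UnitAddCircle → ℝ} (hu : MemLp u 2) :
    ∫⁻ x, ‖∫ y, quarterSign x y • u y‖ₑ ^ 2 ≤
      ENNReal.ofReal ((2 / π) ^ 2) * ∫⁻ y, ‖u y‖ₑ ^ 2 := by
  have h := integral_sq_integral_quarterSign_le (u := fun y => (u y : ℂ)) hu.ofReal
  have e (x : UnitAddCircle) :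
      ∫ y, quarterSign x y • (u y : ℂ) = ((∫ y, quarterSign x y • u y : ℝ) : ℂ) := by
    rw [← integral_complex_ofReal]
    congr 1 with y
    simp
  simp only [e, Complex.norm_real] at h
  rw [lintegral_enorm_sq_eq_ofReal (memLp_integral_quarterSign (hu.integrable (by norm_num)) 2),
    lintegral_enorm_sq_eq_ofReal hu, ← ENNReal.ofReal_mul (by positivity)]
  exact ENNReal.ofReal_le_ofReal h

lemma Orthonormal.countable_of_separableSpace {ι E : Type*} [NormedAddCommGroup E]
    [InnerProductSpace ℝ E] [TopologicalSpace.SeparableSpace E] {v : ι → E}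
    (hv : Orthonormal ℝ v) : Countable ι := by
  refine Pairwise.countable_of_isOpen_disjoint (s := fun i => Metric.ball (v i) (1 / 2))
    (fun i j hij => ?_) (fun i => Metric.isOpen_ball) fun i => ⟨v i, by simp⟩
  refine Metric.ball_disjoint_ball ?_
  have h := norm_sub_sq_real (v i) (v j)
  rw [hv.1 i, hv.1 j, hv.2 hij] at h
  rw [dist_eq_norm]
  nlinarith [norm_nonneg (v i - v j)]

lemma HilbertBasis.tsum_enorm_inner_sq {ι E : Type*} [NormedAddCommGroup E]
    [InnerProductSpace ℝ E] (b : HilbertBasis ι ℝ E) (v : E) :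
    ∑' i, ‖inner ℝ (b i) v‖ₑ ^ 2 = ‖v‖ₑ ^ 2 := by
  have h := b.hasSum_inner_mul_inner v v
  have e : (fun i => inner ℝ v (b i) * inner ℝ (b i) v) = fun i => ‖inner ℝ (b i) v‖ ^ 2 := by
    ext i
    rw [real_inner_comm, Real.norm_eq_abs, sq_abs, sq]
  rw [e, real_inner_self_eq_norm_sq] at h
  simp only [enorm_sq_eq_ofReal]
  rw [← ENNReal.ofReal_tsum_of_nonneg (fun i => by positivity) h.summable, h.tsum_eq]

lemma lintegral_sq_integral_quarterSign_le_of_separable {E : Type*} [NormedAddCommGroup E]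
    [InnerProductSpace ℝ E] [CompleteSpace E] [TopologicalSpace.SeparableSpace E]
    {u : UnitAddCircle → E} (hu : MemLp u 2) :
    ∫⁻ x, ‖∫ y, quarterSign x y • u y‖ₑ ^ 2 ≤
      ENNReal.ofReal ((2 / π) ^ 2) * ∫⁻ y, ‖u y‖ₑ ^ 2 := by
  obtain ⟨w, b, -⟩ := exists_hilbertBasis ℝ E
  have : Countable w := b.orthonormal.countable_of_separableSpace
  have hi : Integrable u := hu.integrable (by norm_num)
  have e (i : w) (x : UnitAddCircle) : inner ℝ (b i) (∫ y, quarterSign x y • u y) =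
      ∫ y, quarterSign x y • inner ℝ (b i) (u y) := by
    rw [← integral_inner (integrable_quarterSign_smul hi x)]
    simp only [inner_smul_right, smul_eq_mul]
  have hb (i : w) : MemLp (fun y => inner ℝ (b i) (u y)) 2 := hu.const_inner (b i)
  simp only [← b.tsum_enorm_inner_sq]
  rw [lintegral_tsum, lintegral_tsum, ← ENNReal.tsum_mul_left]
  · refine ENNReal.tsum_le_tsum fun i => ?_
    simp only [e]
    exact lintegral_sq_integral_quarterSign_le_of_real (hb i)
  · exact fun i => (hb i).1.enorm.pow_const 2
  · exact fun i => ((memLp_integral_quarterSign hi 2).const_inner (b i)).1.enorm.pow_const 2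

/-- A square-integrable function takes almost all its values in a separable Hilbert space. -/
lemma exists_memLp_submodule_ae_eq {α H : Type*} [MeasurableSpace α] {μ : Measure α}
    [NormedAddCommGroup H] [InnerProductSpace ℝ H] [CompleteSpace H] {u : α → H}
    (hu : MemLp u 2 μ) :
    ∃ V : Submodule ℝ H, TopologicalSpace.SeparableSpace V ∧ CompleteSpace V ∧
      ∃ v : α → V, MemLp v 2 μ ∧ ∀ᵐ y ∂μ, (v y : H) = u y := by
  obtain ⟨t, ht, hut⟩ := hu.1.isSeparable_ae_range
  obtain ⟨V, hV, hVc, htV⟩ : ∃ V : Submodule ℝ H, TopologicalSpace.SeparableSpace V ∧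
      CompleteSpace V ∧ t ⊆ V :=
    ⟨(Submodule.span ℝ t).topologicalClosure, (ht.span (R := ℝ)).closure.separableSpace,
      (Submodule.isClosed_topologicalClosure _).completeSpace_coe,
      Submodule.subset_span.trans subset_closure⟩
  refine ⟨V, hV, hVc, fun y => V.orthogonalProjectionOnto (u y),
    V.orthogonalProjectionOnto.comp_memLp' hu, ?_⟩
  filter_upwards [hut] with y hy
  exact congrArg Subtype.val
    (V.orthogonalProjectionOnto_mem_subspace_eq_self ⟨u y, htV hy⟩)

/-- The integral operator with kernel `quarterSign` has norm at most `2 / π` on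
square-integrable functions with values in a Hilbert space. -/
lemma lintegral_sq_integral_quarterSign_le {H : Type*} [NormedAddCommGroup H]
    [InnerProductSpace ℝ H] [CompleteSpace H] {u : UnitAddCircle → H} (hu : MemLp u 2) :
    ∫⁻ x, ‖∫ y, quarterSign x y • u y‖ₑ ^ 2 ≤
      ENNReal.ofReal ((2 / π) ^ 2) * ∫⁻ y, ‖u y‖ₑ ^ 2 := by
  obtain ⟨V, hV, hVc, v, hv, hvu⟩ := exists_memLp_submodule_ae_eq hu
  have hT (x : UnitAddCircle) : ‖∫ y, quarterSign x y • u y‖ₑ =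
      ‖∫ y, quarterSign x y • v y‖ₑ := by
    have e : ∫ y, quarterSign x y • u y = V.subtypeL (∫ y, quarterSign x y • v y) := by
      rw [← V.subtypeL.integral_comp_comm
        (integrable_quarterSign_smul (hv.integrable (by norm_num)) x)]
      refine integral_congr_ae ?_
      filter_upwards [hvu] with y hy
      simp [hy]
    rw [e]
    exact V.subtypeₗᵢ.enorm_map _
  have hnorm : ∫⁻ y, ‖u y‖ₑ ^ 2 = ∫⁻ y, ‖v y‖ₑ ^ 2 := by
    refine lintegral_congr_ae ?_
    filter_upwards [hvu] with y hy
    rw [← V.subtypeₗᵢ.enorm_map, Submodule.coe_subtypeₗᵢ, Submodule.subtype_apply, hy]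
  simp only [hT, hnorm]
  exact lintegral_sq_integral_quarterSign_le_of_separable hv

/-- Let `𝕋 = ℝ/ℤ` with its Haar probability measure and `f(x,y) = 1` if `dist x y < 1/4`,
`-1` otherwise. For measurable `h : 𝕋 → H` of unit norm a.e. and
`G(x) = ∫_𝕋 f(x,y) h(y) dy`, one has `∫_𝕋 ‖G(x)‖ dx ≤ 2/π`. -/
theorem bell_example2_G_norm_bound (H : Type*) [NormedAddCommGroup H]
    [InnerProductSpace ℝ H] [MeasurableSpace H] [BorelSpace H] [CompleteSpace H]
    (h : UnitAddCircle → H) (hm : Measurable h)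
    (h1 : ∀ᵐ y : UnitAddCircle, ‖h y‖ = 1)
    (G : UnitAddCircle → H)
    (hG : ∀ x : UnitAddCircle,
      G x = ∫ y : UnitAddCircle, (if dist x y < 1/4 then (1:ℝ) else -1) • h y) :
    (∫ x : UnitAddCircle, ‖G x‖) ≤ 2 / π := by

  have hG' : G = fun x => ∫ y, quarterSign x y • h y := funext hG
  by_cases hs : AEStronglyMeasurable h
  · have hu (p : ENNReal) : MemLp h p := .of_bound hs 1 (h1.mono fun y hy => hy.le)
    have hGp (p : ENNReal) : MemLp G p := by
      rw [hG']
      exact memLp_integral_quarterSign ((hu 1).integrable le_rfl) p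
    have hh : ∫ y, ‖h y‖ ^ 2 = 1 := by
      rw [integral_congr_ae (g := fun _ => (1 : ℝ)) (by filter_upwards [h1] with y hy; simp [hy])]
      simp [Measure.real]
    have hsq : ∫ x, ‖G x‖ ^ 2 ≤ (2 / π) ^ 2 := by
      have hle : ∫⁻ x, ‖G x‖ₑ ^ 2 ≤ ENNReal.ofReal ((2 / π) ^ 2) * ∫⁻ y, ‖h y‖ₑ ^ 2 := by
        rw [hG']
        exact lintegral_sq_integral_quarterSign_le (hu 2)
      rw [lintegral_enorm_sq_eq_ofReal (hGp 2), lintegral_enorm_sq_eq_ofReal (hu 2), hh,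
        ENNReal.ofReal_one, mul_one] at hle
      exact (ENNReal.ofReal_le_ofReal_iff (by positivity)).1 hle
    have hI2 : Integrable fun x => ‖G x‖ ^ 2 :=
      (memLp_two_iff_integrable_sq_norm (hGp 2).1).1 (hGp 2)
    calc ∫ x, ‖G x‖ ≤ ∫ x, (π / 4 * ‖G x‖ ^ 2 + 1 / π) := by
          refine integral_mono ((hGp 1).integrable le_rfl).norm
            ((hI2.const_mul _).add (integrable_const _)) fun x => ?_
          have hsquare : π / 4 * ‖G x‖ ^ 2 + 1 / π - ‖G x‖ =
              π / 4 * (‖G x‖ - 2 / π) ^ 2 := by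
            field_simp
            ring
          have : 0 ≤ π / 4 * (‖G x‖ - 2 / π) ^ 2 := by positivity
          simp only
          linarith
      _ = π / 4 * (∫ x, ‖G x‖ ^ 2) + 1 / π := by
          rw [integral_add (hI2.const_mul _) (integrable_const _), integral_const_mul]
          simp [Measure.real]
      _ ≤ π / 4 * (2 / π) ^ 2 + 1 / π := by gcongr
      _ = 2 / π := by
          field_simp
          norm_num
  · have hzero (x : UnitAddCircle) : G x = 0 := by
      rw [hG']
      refine integral_undef fun hint => hs ?_
      have hk : AEStronglyMeasurable (quarterSign x) :=
        (measurable_quarterSign.comp measurable_prodMk_left).aestronglyMeasurable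
      refine (hk.smul hint.1).congr (.of_forall fun y => ?_)
      have hone : quarterSign x y * quarterSign x y = 1 := by
        unfold quarterSign
        split_ifs <;> norm_num
      simp [smul_smul, hone]
    simp only [hzero, norm_zero, integral_zero]
    positivity
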